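/- arXiv:2308.08080 — 3 statements merged into one kernel-verified Lean document; each statement's English description precedes it below -/
import Mathlib

section
/- Let 𝒯 be a triangulated category admitting all small coproducts and let E, G be objects of 𝒯. If E belongs to ⟨G⟩̄_n, then for every j ≥ 0 the subcategory ⟨E⟩̄_j is contained in ⟨G⟩̄_{jn}. -/
/-!
The proof compares the levels `⟨G⟩̄ₘ` with `G`-ghosts, the maps `b` such that `a ≫ b = 0` for every
`a : G⟦i⟧ ⟶ X`. An object lies in `⟨G⟩̄ₘ` exactly when every composite of `m` ghosts out of it
vanishes:

* one direction is the ghost lemma `eq_zero_of_mem_bigLevel`;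
* conversely, iterating the cone of the cover `∐ G⟦i⟧ ⟶ Y` (over all maps from shifts of `G`) yields
  a composite of `m` ghosts `h : Y ⟶ Y'` such that every `g` with `g ≫ h = 0` factors through an
  object of `⟨G⟩̄ₘ` (`exists_universal_ghostPow`). If `h = 0`, taking `g = 𝟙 Y` exhibits `Y` as a
  retract of an object of `⟨G⟩̄ₘ`.

If `E ∈ ⟨G⟩̄ₙ`, the ghost lemma says that a composite of `n` `G`-ghosts is an `E`-ghost. Hence a
composite of `jn` `G`-ghosts is a composite of `j` `E`-ghosts and vanishes on every object of
`⟨E⟩̄ⱼ`, so that these objects lie in `⟨G⟩̄_{jn}`. The octahedral axiom, which is not part of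
`Pretriangulated`, is avoided: the factorization is built from completions of morphisms of
triangles alone.
-/

/-!
STATEMENT 1: Let 𝒯 be a triangulated category admitting all small coproducts and
let E, G be objects of 𝒯. If E belongs to ⟨G⟩̄_n, then for every j ≥ 0 the
subcategory ⟨E⟩̄_j is contained in ⟨G⟩̄_{jn}.
-/

open CategoryTheory Limits Pretriangulated

universe v u

namespace Stmt

variable {C : Type u} [Category.{v} C]

/-- `X` is a retract (direct summand) of `Y`. -/
def IsRetract (X Y : C) : Prop := ∃ (i : X ⟶ Y) (p : Y ⟶ X), i ≫ p = 𝟙 X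

variable [HasZeroObject C] [Preadditive C] [HasShift C ℤ]
  [∀ n : ℤ, (shiftFunctor C n).Additive] [Pretriangulated C]

/-- The objects of `⟨G⟩̄₁`: the smallest collection of objects containing `G` that is
closed under shifts, arbitrary small coproducts, and direct summands (retracts). -/
def bigOne (G : C) : Set C :=
  ⋂₀ {S : Set C | G ∈ S ∧ (∀ X ∈ S, ∀ n : ℤ, (X⟦n⟧ : C) ∈ S) ∧
      (∀ (ι : Type v) (f : ι → C) (_ : HasCoproduct f), (∀ i, f i ∈ S) → (∐ f) ∈ S) ∧
      (∀ X Y : C, Y ∈ S → IsRetract X Y → X ∈ S)}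

/-- The objects of `⟨G⟩̄ₙ`: `⟨G⟩̄₀` consists of the objects isomorphic to `0`;
`⟨G⟩̄₁` is `bigOne G`; for `n ≥ 2`, `⟨G⟩̄ₙ` consists of the direct summands of objects `E`
fitting in a distinguished triangle `A ⟶ E ⟶ B ⟶ A⟦1⟧` with `A ∈ ⟨G⟩̄ₙ₋₁` and `B ∈ ⟨G⟩̄₁`. -/
def bigLevel (G : C) : ℕ → Set C
  | 0 => {X | IsZero X}
  | 1 => bigOne G
  | (n + 2) => {X | ∃ (E A B : C) (f : A ⟶ E) (g : E ⟶ B) (h : B ⟶ A⟦(1 : ℤ)⟧),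
      (Triangle.mk f g h ∈ distTriang C) ∧ A ∈ bigLevel G (n + 1) ∧ B ∈ bigOne G ∧
      IsRetract X E}

open scoped ZeroObject

set_option linter.unusedSectionVars false

theorem bigOne_self (G : C) : G ∈ bigOne G := fun _ hS => hS.1

theorem bigOne_shift {G X : C} (hX : X ∈ bigOne G) (n : ℤ) : (X⟦n⟧ : C) ∈ bigOne G :=
  fun S hS => hS.2.1 X (hX S hS) n

theorem bigOne_coproduct {G : C} {ι : Type v} (f : ι → C) [hf : HasCoproduct f]
    (h : ∀ i, f i ∈ bigOne G) : (∐ f) ∈ bigOne G :=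
  fun S hS => hS.2.2.1 ι f hf fun i => h i S hS

theorem bigOne_retract {G X Y : C} (hY : Y ∈ bigOne G) (h : IsRetract X Y) : X ∈ bigOne G :=
  fun S hS => hS.2.2.2 X Y (hY S hS) h

theorem bigLevel_retract {G X Y : C} {m : ℕ} (hY : Y ∈ bigLevel G m) (h : IsRetract X Y) :
    X ∈ bigLevel G m := by
  obtain ⟨i, p, hip⟩ := h
  match m, hY with
  | 0, hY =>
    refine (IsZero.iff_id_eq_zero X).2 ?_
    rw [← hip, IsZero.eq_of_tgt hY i 0, zero_comp]
  | 1, hY => exact bigOne_retract hY ⟨i, p, hip⟩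
  | m + 2, ⟨E, A, B, f, g, k, hT, hA, hB, i', p', hip'⟩ =>
    refine ⟨E, A, B, f, g, k, hT, hA, hB, i ≫ i', p' ≫ p, ?_⟩
    rw [Category.assoc, reassoc_of% hip', hip]

/-- The inductive step in the definition of `bigLevel`, including the case `m = 0`, where `W ≅ B`. -/
theorem bigLevel_succ {G A W B : C} {m : ℕ} {f : A ⟶ W} {g : W ⟶ B} {k : B ⟶ A⟦(1 : ℤ)⟧}
    (hT : Triangle.mk f g k ∈ distTriang C) (hA : A ∈ bigLevel G m) (hB : B ∈ bigOne G) :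
    W ∈ bigLevel G (m + 1) := by
  match m, hA with
  | 0, hA =>
    have : IsIso g := (Triangle.isZero₁_iff_isIso₂ _ hT).1 hA
    exact bigOne_retract hB ⟨g, inv g, IsIso.hom_inv_id g⟩
  | m + 1, hA => exact ⟨W, A, B, f, g, k, hT, hA, hB, 𝟙 W, 𝟙 W, Category.comp_id _⟩

/-- A `G`-ghost: a morphism killed by precomposition with every map from a shift of `G`. -/
def Ghost (G : C) {X Y : C} (b : X ⟶ Y) : Prop :=
  ∀ (i : ℤ) (a : (G⟦i⟧ : C) ⟶ X), a ≫ b = 0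

/-- The morphisms that are composites of an arbitrary morphism followed by `m` `G`-ghosts; in
particular all morphisms for `m = 0`. -/
def ghostPow (G : C) : ℕ → ∀ ⦃X Y : C⦄, (X ⟶ Y) → Prop
  | 0 => fun _ _ _ => True
  | m + 1 => fun X Y f => ∃ (Z : C) (a : X ⟶ Z) (b : Z ⟶ Y), ghostPow G m a ∧ Ghost G b ∧ a ≫ b = f

theorem shift_comp_eq_zero {X Y Z : C} (n : ℤ) (b : Z ⟶ Y)
    (h : ∀ a : X ⟶ Z⟦-n⟧, a ≫ b⟦-n⟧' = 0) (a : (X⟦n⟧ : C) ⟶ Z) : a ≫ b = 0 := by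
  apply (shiftFunctor C (-n)).map_injective
  rw [Functor.map_comp, Functor.map_zero]
  have := h ((shiftShiftNeg X n).inv ≫ a⟦-n⟧')
  rw [Category.assoc] at this
  exact (Preadditive.IsIso.comp_left_eq_zero _ _).1 this

theorem Ghost.shift {G X Y : C} {b : X ⟶ Y} (hb : Ghost G b) (n : ℤ) : Ghost G (b⟦n⟧') := by
  intro i a
  apply (shiftFunctor C (-n)).map_injective
  rw [Functor.map_comp, Functor.map_zero, shift_shift_neg']
  have h := hb (i + -n) ((shiftFunctorAdd C i (-n)).hom.app G ≫ a⟦-n⟧' ≫ (shiftShiftNeg X n).hom)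
  simp only [Category.assoc] at h
  have h' : a⟦-n⟧' ≫ (shiftFunctorCompIsoId C n (-n) (add_neg_cancel n)).hom.app X ≫ b = 0 :=
    (Preadditive.IsIso.comp_left_eq_zero _ _).1 h
  rw [reassoc_of% h', zero_comp]

theorem ghostPow_shift {G : C} {m : ℕ} (n : ℤ) :
    ∀ {X Y : C} {f : X ⟶ Y}, ghostPow G m f → ghostPow G m (f⟦n⟧') := by
  induction m with
  | zero => intros; trivial
  | succ m ih =>
    rintro X Y _ ⟨Z, a, b, ha, hb, rfl⟩
    exact ⟨_, a⟦n⟧', b⟦n⟧', ih ha, hb.shift n, (Functor.map_comp _ _ _).symm⟩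

theorem ghostPow_precomp {G : C} {m : ℕ} : ∀ {W X Y : C} (c : W ⟶ X) {f : X ⟶ Y},
    ghostPow G m f → ghostPow G m (c ≫ f) := by
  induction m with
  | zero => intros; trivial
  | succ m ih =>
    rintro W X Y c _ ⟨Z, a, b, ha, hb, rfl⟩
    exact ⟨Z, c ≫ a, b, ih c ha, hb, Category.assoc _ _ _⟩

theorem ghostPow_add {G : C} {p q : ℕ} : ∀ {X Y : C} {f : X ⟶ Y}, ghostPow G (p + q) f →
    ∃ (Z : C) (a : X ⟶ Z) (b : Z ⟶ Y), ghostPow G p a ∧ ghostPow G q b ∧ a ≫ b = f := by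
  induction q with
  | zero => exact fun {X Y f} hf => ⟨Y, f, 𝟙 Y, hf, trivial, Category.comp_id f⟩
  | succ q ih =>
    rintro X Y _ ⟨Z, c, d, hc, hd, rfl⟩
    obtain ⟨Z', a, b, ha, hb, rfl⟩ := ih hc
    exact ⟨Z', a, b ≫ d, ha, ⟨Z, b, d, hb, hd, rfl⟩, (Category.assoc _ _ _).symm⟩

theorem comp_ghost_eq_zero {G B : C} (hB : B ∈ bigOne G) {X Y : C} (a : B ⟶ X) {b : X ⟶ Y}
    (hb : Ghost G b) : a ≫ b = 0 := by
  let S : Set C := {B | ∀ (X Y : C) (a : B ⟶ X) (b : X ⟶ Y), Ghost G b → a ≫ b = 0}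
  suffices h : B ∈ S from h X Y a b hb
  refine hB S ⟨?_, ?_, ?_, ?_⟩
  · intro X Y a b hb
    have h := hb 0 ((shiftFunctorZero C ℤ).hom.app G ≫ a)
    rw [Category.assoc] at h
    exact (Preadditive.IsIso.comp_left_eq_zero _ _).1 h
  · intro B hB n X Y a b hb
    exact shift_comp_eq_zero n b (fun a' => hB _ _ a' _ (hb.shift _)) a
  · intro ι f _ hf X Y a b hb
    refine Sigma.hom_ext _ _ fun i => ?_
    rw [← Category.assoc, hf i _ _ (Sigma.ι f i ≫ a) b hb, comp_zero]
  · rintro B B' hB' ⟨i, p, hip⟩ X Y a b hb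
    have h := hB' X Y (p ≫ a) b hb
    rw [← Category.id_comp a, ← hip, Category.assoc, Category.assoc, ← Category.assoc p, h,
      comp_zero]

/-- The ghost lemma: composites of `m` ghosts vanish on `⟨G⟩̄ₘ`. -/
theorem eq_zero_of_mem_bigLevel {G : C} : ∀ (m : ℕ) {X Y : C} {f : X ⟶ Y},
    X ∈ bigLevel G m → ghostPow G m f → f = 0
  | 0, _, _, f, hX, _ => IsZero.eq_of_src hX f 0
  | 1, _, _, _, hX, ⟨_, a, _, _, hb, h⟩ => h ▸ comp_ghost_eq_zero hX a hb
  | m + 2, X, Y, f, ⟨E, A, B, f', g', k', hT, hA, hB, i, p, hip⟩, ⟨Z, a, b, ha, hb, h⟩ => by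
    -- On `A` the first `m + 1` ghosts already vanish, so their composite factors through `B`,
    -- where the last ghost vanishes.
    have ha' : ghostPow G (m + 1) (f' ≫ p ≫ a) := ghostPow_precomp f' (ghostPow_precomp p ha)
    obtain ⟨c, hc⟩ : ∃ c : B ⟶ Z, p ≫ a = g' ≫ c := Triangle.yoneda_exact₂ _ hT (p ≫ a)
      (eq_zero_of_mem_bigLevel (m + 1) hA ha')
    rw [← h, ← Category.id_comp a, ← hip, Category.assoc, Category.assoc, ← Category.assoc p,
      hc, Category.assoc, comp_ghost_eq_zero hB c hb, comp_zero, comp_zero]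

/-- Every object `X` receives a map from an object of `⟨G⟩̄₁` through which all maps from shifts
of `G` factor: the coproduct of all these maps. -/
theorem exists_cover [HasCoproducts.{v} C] (G X : C) : ∃ (P : C) (p : P ⟶ X), P ∈ bigOne G ∧
    ∀ (i : ℤ) (a : (G⟦i⟧ : C) ⟶ X), ∃ c : (G⟦i⟧ : C) ⟶ P, c ≫ p = a := by
  let J : Type v := Σ i : ULift.{v} ℤ, ((G⟦i.down⟧ : C) ⟶ X)
  let F : J → C := fun x => (G⟦x.1.down⟧ : C)
  refine ⟨∐ F, Sigma.desc fun x => x.2, bigOne_coproduct F fun x =>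
    bigOne_shift (bigOne_self G) _, fun i a => ⟨Sigma.ι F ⟨⟨i⟩, a⟩, ?_⟩⟩
  exact Sigma.ι_desc (f := F) (fun x => x.2) ⟨⟨i⟩, a⟩

/-- Every object `Y` has a composite of `m` ghosts `h : Y ⟶ Y'` such that all maps killed by `h`
factor through an object of `⟨G⟩̄ₘ`. -/
theorem exists_universal_ghostPow [HasCoproducts.{v} C] (G Y : C) (m : ℕ) :
    ∃ (Y' : C) (h : Y ⟶ Y'), ghostPow G m h ∧ ∀ (Z : C) (g : Z ⟶ Y), g ≫ h = 0 →
      ∃ (W : C) (s : Z ⟶ W) (t : W ⟶ Y), W ∈ bigLevel G m ∧ s ≫ t = g := by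
  induction m with
  | zero =>
    refine ⟨Y, 𝟙 Y, trivial, fun Z g hg => ⟨0, 0, 0, isZero_zero C, ?_⟩⟩
    rw [Category.comp_id] at hg
    rw [hg, comp_zero]
  | succ m ih =>
    obtain ⟨Y', h, hh, hfac⟩ := ih
    obtain ⟨P, p, hP, hcov⟩ := exists_cover G Y'
    obtain ⟨Y'', q, r, hT⟩ := distinguished_cocone_triangle p
    have hpq : p ≫ q = 0 := comp_distTriang_mor_zero₁₂ _ hT
    refine ⟨Y'', h ≫ q, ⟨Y', h, q, hh, fun i a => ?_, rfl⟩, fun Z g hg => ?_⟩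
    · obtain ⟨c, rfl⟩ := hcov i a
      rw [Category.assoc, hpq, comp_zero]
    obtain ⟨b, hb⟩ : ∃ b : Z ⟶ P, g ≫ h = b ≫ p :=
      Triangle.coyoneda_exact₂ _ hT (g ≫ h) ((Category.assoc _ _ _).trans hg)
    -- On the fibre `Z'` of `b` the map `g ≫ h` vanishes, so the induction hypothesis applies there.
    obtain ⟨Z', k, l, hT'⟩ := distinguished_cocone_triangle₁ b
    have hkb : k ≫ b = 0 := comp_distTriang_mor_zero₁₂ _ hT'
    have hlk : l ≫ k⟦(1 : ℤ)⟧' = 0 := comp_distTriang_mor_zero₃₁ _ hT'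
    obtain ⟨A, s, t, hA, hst⟩ := hfac Z' (k ≫ g)
      (by rw [Category.assoc, hb, ← Category.assoc, hkb, zero_comp])
    -- `W` is the extension of `P` by `A` obtained by pushing out `Z' ⟶ Z` along `s`.
    obtain ⟨W, f, e, hT''⟩ := distinguished_cocone_triangle₂ (l ≫ s⟦(1 : ℤ)⟧')
    obtain ⟨w, hw₁, hw₂⟩ : ∃ w : Z ⟶ W, k ≫ w = s ≫ f ∧ b ≫ 𝟙 P = w ≫ e :=
      complete_distinguished_triangle_morphism₂ _ _ hT' hT'' s (𝟙 P)
        (Category.id_comp _).symm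
    -- The extension of `t` to `W` is a morphism to the triangle `Y ⟶ Y ⟶ 0`.
    obtain ⟨u, hu, -⟩ : ∃ u : W ⟶ Y, f ≫ u = t ≫ 𝟙 Y ∧ e ≫ (0 : P ⟶ 0) = u ≫ 0 :=
      complete_distinguished_triangle_morphism₂ _ _ hT'' (contractible_distinguished Y) t 0 (by
        have : (l ≫ s⟦(1 : ℤ)⟧') ≫ t⟦(1 : ℤ)⟧' = 0 := by
          rw [Category.assoc, ← Functor.map_comp, hst, Functor.map_comp, reassoc_of% hlk,
            zero_comp]
        exact this.trans zero_comp.symm)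
    rw [Category.comp_id] at hu hw₂
    -- `w ≫ u` and `g` agree on `Z'`; their difference factors through `b = w ≫ e`, which allows
    -- correcting `u`.
    obtain ⟨d, hd⟩ : ∃ d : P ⟶ Y, g - w ≫ u = b ≫ d :=
      Triangle.yoneda_exact₂ _ hT' (g - w ≫ u) (by
        change k ≫ (g - w ≫ u) = 0
        rw [Preadditive.comp_sub, ← Category.assoc k w, hw₁, Category.assoc, hu, hst, sub_self])
    refine ⟨W, w, u + e ≫ d, bigLevel_succ hT'' hA hP, ?_⟩
    rw [Preadditive.comp_add, ← Category.assoc w e, ← hw₂, ← hd, add_sub_cancel]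

theorem ghost_of_ghostPow {E G : C} {n : ℕ} (hE : E ∈ bigLevel G n) {X Y : C} {f : X ⟶ Y}
    (hf : ghostPow G n f) : Ghost E f := fun i a =>
  shift_comp_eq_zero i f (fun a' => eq_zero_of_mem_bigLevel n hE
    (ghostPow_precomp a' (ghostPow_shift (-i) hf))) a

theorem ghostPow_mul {E G : C} {n : ℕ} (hE : E ∈ bigLevel G n) {j : ℕ} :
    ∀ {X Y : C} {f : X ⟶ Y}, ghostPow G (j * n) f → ghostPow E j f := by
  induction j with
  | zero => intros; trivial
  | succ j ih =>
    intro X Y f hf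
    rw [Nat.succ_mul] at hf
    obtain ⟨Z, a, b, ha, hb, rfl⟩ := ghostPow_add hf
    exact ⟨Z, a, b, ih ha, ghost_of_ghostPow hE hb, rfl⟩

theorem statement1 [HasCoproducts.{v} C] (E G : C) (n : ℕ) (hE : E ∈ bigLevel G n)
    (j : ℕ) : bigLevel E j ⊆ bigLevel G (j * n) := by
  intro X hX
  obtain ⟨X', h, hh, hfac⟩ := exists_universal_ghostPow G X (j * n)
  have h0 : h = 0 := eq_zero_of_mem_bigLevel j hX (ghostPow_mul hE hh)
  obtain ⟨W, s, t, hW, hst⟩ := hfac X (𝟙 X) (by rw [h0, comp_zero])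
  exact bigLevel_retract hW ⟨s, t, hst⟩

end Stmt
end

section
/- Let 𝒯 be a triangulated category equipped with a monoidal structure with unit 1 such that for every object E the endofunctor (−) ⊗ E is exact. If the unit 1 belongs to ⟨A⟩_n for some object A and some n ≥ 0, then every object E of 𝒯 belongs to ⟨A ⊗ E⟩_n. -/
/-!
An exact endofunctor `F` maps `⟨G⟩ₙ` into `⟨F G⟩ₙ`: it commutes with shifts, preserves binary
direct sums, retracts and distinguished triangles, so the case `n = 1` follows from the
minimality of `⟨G⟩₁` (`map_mem_classOne`) and the general case by induction on `n`
(`map_mem_classLevel`). With `F = (-) ⊗ E` this gives `𝟙_ C ⊗ E ∈ ⟨A ⊗ E⟩ₙ`, and `E` is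
isomorphic to `𝟙_ C ⊗ E` via the left unitor.
-/

open CategoryTheory Limits Pretriangulated MonoidalCategory

universe v u v₂ u₂

namespace Stmt

variable {C : Type u} [Category.{v} C]

section Classical

variable [HasZeroObject C] [Preadditive C] [HasShift C ℤ]
  [∀ n : ℤ, (shiftFunctor C n).Additive] [Pretriangulated C] [HasBinaryBiproducts C]

/-- The objects of `⟨G⟩₁`: the smallest collection of objects containing `G` that is
closed under shifts, finite coproducts, and direct summands (retracts).
(Closure under finite coproducts amounts to closure under binary direct sums, since the
empty coproduct `0` is a retract of any object.) -/
def classOne (G : C) : Set C :=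
  ⋂₀ {S : Set C | G ∈ S ∧ (∀ X ∈ S, ∀ n : ℤ, (X⟦n⟧ : C) ∈ S) ∧
      (∀ X Y : C, X ∈ S → Y ∈ S → (X ⊞ Y) ∈ S) ∧
      (∀ X Y : C, Y ∈ S → IsRetract X Y → X ∈ S)}

/-- The objects of `⟨G⟩ₙ`: `⟨G⟩₀` consists of the objects isomorphic to `0`;
`⟨G⟩₁` is `classOne G`; for `n ≥ 2`, `⟨G⟩ₙ` consists of the direct summands of objects `E`
fitting in a distinguished triangle `A ⟶ E ⟶ B ⟶ A⟦1⟧` with `A ∈ ⟨G⟩ₙ₋₁` and `B ∈ ⟨G⟩₁`. -/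
def classLevel (G : C) : ℕ → Set C
  | 0 => {X | IsZero X}
  | 1 => classOne G
  | (n + 2) => {X | ∃ (E A B : C) (f : A ⟶ E) (g : E ⟶ B) (h : B ⟶ A⟦(1 : ℤ)⟧),
      (Triangle.mk f g h ∈ distTriang C) ∧ A ∈ classLevel G (n + 1) ∧ B ∈ classOne G ∧
      IsRetract X E}

end Classical

section Helpers

lemma IsRetract.of_iso {X Y : C} (e : X ≅ Y) : IsRetract X Y := ⟨e.hom, e.inv, e.hom_inv_id⟩

lemma IsRetract.trans {X Y Z : C} (h : IsRetract X Y) (h' : IsRetract Y Z) : IsRetract X Z := by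
  obtain ⟨i, p, hip⟩ := h
  obtain ⟨j, q, hjq⟩ := h'
  exact ⟨i ≫ j, q ≫ p, by rw [Category.assoc, ← Category.assoc j, hjq, Category.id_comp, hip]⟩

lemma IsRetract.map {X Y : C} (h : IsRetract X Y) (F : C ⥤ C) :
    IsRetract (F.obj X) (F.obj Y) := by
  obtain ⟨i, p, hip⟩ := h
  exact ⟨F.map i, F.map p, by rw [← F.map_comp, hip, F.map_id]⟩

section ClosureProperties

variable [Preadditive C] [HasShift C ℤ] [HasBinaryBiproducts C]

lemma classOne_self (G : C) : G ∈ classOne G := fun _ hS => hS.1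

lemma classOne_shift {G X : C} (h : X ∈ classOne G) (n : ℤ) : (X⟦n⟧ : C) ∈ classOne G :=
  fun S hS => hS.2.1 X (h S hS) n

lemma classOne_biprod {G X Y : C} (hX : X ∈ classOne G) (hY : Y ∈ classOne G) :
    (X ⊞ Y) ∈ classOne G :=
  fun S hS => hS.2.2.1 X Y (hX S hS) (hY S hS)

lemma classOne_retract {G X Y : C} (hY : Y ∈ classOne G) (h : IsRetract X Y) :
    X ∈ classOne G :=
  fun S hS => hS.2.2.2 X Y (hY S hS) h

end ClosureProperties

variable [HasZeroObject C] [Preadditive C] [HasShift C ℤ]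
  [∀ n : ℤ, (shiftFunctor C n).Additive] [Pretriangulated C] [HasBinaryBiproducts C]

lemma classLevel_retract {G X Y : C} {n : ℕ} (hY : Y ∈ classLevel G n) (h : IsRetract X Y) :
    X ∈ classLevel G n := by
  match n, hY with
  | 0, hY =>
    obtain ⟨i, p, hip⟩ := h
    have hY' : IsZero Y := hY
    refine (IsZero.iff_id_eq_zero X).2 ?_
    rw [← hip, hY'.eq_zero_of_tgt i, zero_comp]
  | 1, hY => exact classOne_retract hY h
  | n + 2, hY =>
    obtain ⟨E, A, B, f, g, k, hT, hA, hB, hr⟩ := hY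
    exact ⟨E, A, B, f, g, k, hT, hA, hB, h.trans hr⟩

/-- The preimage of `⟨F G⟩₁` under `F` contains `G` and has the closure properties defining
`⟨G⟩₁`, hence contains `⟨G⟩₁`. -/
lemma map_mem_classOne (F : C ⥤ C) [F.CommShift ℤ] [F.IsTriangulated] {G X : C}
    (h : X ∈ classOne G) : F.obj X ∈ classOne (F.obj G) := by
  refine h {X | F.obj X ∈ classOne (F.obj G)} ⟨classOne_self _, ?_, ?_, ?_⟩
  · intro X hX n
    exact classOne_retract (classOne_shift hX n) (.of_iso ((F.commShiftIso n).app X))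
  · intro X Y hX hY
    have := preservesBinaryBiproduct_of_preservesBinaryProduct F (X := X) (Y := Y)
    exact classOne_retract (classOne_biprod hX hY) (.of_iso (F.mapBiprod X Y))
  · intro X Y hY hr
    exact classOne_retract hY (hr.map F)

lemma map_mem_classLevel (F : C ⥤ C) [F.CommShift ℤ] [F.IsTriangulated] {G X : C} {n : ℕ}
    (h : X ∈ classLevel G n) : F.obj X ∈ classLevel (F.obj G) n := by
  induction n using Nat.twoStepInduction generalizing X with
  | zero => exact F.map_isZero (h : IsZero X)
  | one => exact map_mem_classOne F h
  | more n _ ih =>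
    obtain ⟨E, A, B, f, g, k, hT, hA, hB, hr⟩ := h
    exact ⟨F.obj E, F.obj A, F.obj B, F.map f, F.map g, _, F.map_distinguished _ hT,
      ih hA, map_mem_classOne F hB, hr.map F⟩

end Helpers

/--
in a triangulated category equipped with a monoidal structure with unit
`𝟙_ C` such that for every object `E` the endofunctor `(-) ⊗ E` is exact: if
`𝟙_ C ∈ ⟨A⟩ₙ` for some object `A` and `n ≥ 0`, then every object `E` belongs to
`⟨A ⊗ E⟩ₙ`.
-/
theorem statement12 [HasZeroObject C] [Preadditive C] [HasShift C ℤ]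
    [∀ n : ℤ, (shiftFunctor C n).Additive] [Pretriangulated C] [HasBinaryBiproducts C]
    [MonoidalCategory C]
    [∀ X : C, (tensorRight X).CommShift ℤ] [∀ X : C, (tensorRight X).IsTriangulated]
    (A : C) (n : ℕ) (h1 : (𝟙_ C) ∈ classLevel A n) (E : C) :
    E ∈ classLevel (A ⊗ E) n := by
  exact classLevel_retract (map_mem_classLevel (tensorRight E) h1) (.of_iso (λ_ E).symm)

end Stmt
end

section
/- Let R be a commutative Noetherian ring of finite Krull dimension. Then every object E of D(Mod R) whose homology modules are all finitely generated and vanish in all but finitely many degrees belongs to the smallest thick subcategory of D(Mod R) containing the set of objects {R/𝔭 : 𝔭 a prime ideal of R}, each regarded as a complex concentrated in degree 0. (This is the affine case of the paper's Corollary: D^b_coh(X) is classically generated by the structure sheaves of the integral closed subschemes of X.) -/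
/-!
A thick subcategory is closed under isomorphisms and extensions. Every finite module over a
Noetherian ring has a finite filtration with subquotients of the form `R ⧸ 𝔭`, so dévissage along
the triangles attached to short exact sequences puts every finite module, placed in any degree,
in the thick closure (`single_mem`). An object with bounded finite homology is then built by
induction on the length of the interval supporting its homology: the truncation triangle
`τ^{≤ a} E ⟶ E ⟶ τ^{≥ a + 1} E` splits off the lowest homology module, and the long exact homology
sequence shows that both truncations again have finite homology (`mem_of_amplitude`).
-/


open CategoryTheory Limits Pretriangulated

universe v u v₂ u₂

namespace Stmt

variable {C : Type u} [Category.{v} C]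

section Thick

variable [HasZeroObject C] [Preadditive C] [HasShift C ℤ]
  [∀ n : ℤ, (shiftFunctor C n).Additive] [Pretriangulated C]

/-- A collection of objects of a pretriangulated category is a thick (triangulated)
subcategory when it contains the zero objects, and is closed under shifts, cones of
morphisms between its objects (two-out-of-three for distinguished triangles), and
direct summands (retracts). -/
def IsThickSubcat (S : Set C) : Prop :=
  (∀ X : C, IsZero X → X ∈ S) ∧
  (∀ X ∈ S, ∀ n : ℤ, (X⟦n⟧ : C) ∈ S) ∧
  (∀ T : Triangle C, (T ∈ distTriang C) → T.obj₁ ∈ S → T.obj₂ ∈ S → T.obj₃ ∈ S) ∧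
  (∀ X Y : C, Y ∈ S → IsRetract X Y → X ∈ S)

/-- The smallest thick subcategory (as a collection of objects) containing `A`. -/
def thickClosure (A : Set C) : Set C := ⋂₀ {S : Set C | A ⊆ S ∧ IsThickSubcat S}

end Thick

section

variable [HasZeroObject C] [Preadditive C] [HasShift C ℤ]
  [∀ n : ℤ, (shiftFunctor C n).Additive] [Pretriangulated C] {S : Set C}

lemma IsThickSubcat.of_iso (hS : IsThickSubcat S) {X Y : C} (e : X ≅ Y) (hY : Y ∈ S) : X ∈ S :=
  hS.2.2.2 X Y hY ⟨e.hom, e.inv, e.hom_inv_id⟩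

lemma IsThickSubcat.ext₂ (hS : IsThickSubcat S) (T : Triangle C) (hT : T ∈ distTriang C)
    (h₁ : T.obj₁ ∈ S) (h₃ : T.obj₃ ∈ S) : T.obj₂ ∈ S :=
  hS.2.2.1 _ (inv_rot_of_distTriang _ hT) (hS.2.1 _ h₃ (-1)) h₁

end

section

variable {R : Type u} [CommRing R] [IsNoetherianRing R] [HasDerivedCategory (ModuleCat.{u} R)]
  {S : Set (DerivedCategory (ModuleCat.{u} R))}

open DerivedCategory

lemma single_zero_mem (hS : IsThickSubcat S)
    (hA : ∀ p : Ideal R, p.IsPrime →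
      (singleFunctor (ModuleCat.{u} R) 0).obj (ModuleCat.of R (R ⧸ p)) ∈ S)
    (M : Type u) [AddCommGroup M] [Module R M] (hM : Module.Finite R M) :
    (singleFunctor (ModuleCat.{u} R) 0).obj (ModuleCat.of R M) ∈ S := by
  induction hM using IsNoetherianRing.induction_on_isQuotientEquivQuotientPrime R with
  | subsingleton N =>
    exact hS.1 _ (Functor.map_isZero _ (ModuleCat.isZero_of_subsingleton (ModuleCat.of R N)))
  | quotient N p f =>
    exact hS.of_iso ((singleFunctor _ 0).mapIso f.toModuleIso) (hA p.1 p.2)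
  | exact N₁ N₂ N₃ f g hf hg hfg h₁ h₃ =>
    have hSE : (ShortComplex.mk (ModuleCat.ofHom f) (ModuleCat.ofHom g)
        (by ext x; exact hfg.apply_apply_eq_zero x)).ShortExact :=
      ModuleCat.shortComplex_shortExact _ hfg hf hg
    exact hS.ext₂ _ hSE.singleTriangle_distinguished h₁ h₃

lemma single_mem (hS : IsThickSubcat S)
    (hA : ∀ p : Ideal R, p.IsPrime →
      (singleFunctor (ModuleCat.{u} R) 0).obj (ModuleCat.of R (R ⧸ p)) ∈ S)
    (M : ModuleCat.{u} R) (hM : Module.Finite R M) (n : ℤ) :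
    (singleFunctor (ModuleCat.{u} R) n).obj M ∈ S :=
  hS.of_iso (((singleFunctors (ModuleCat.{u} R)).shiftIso (-n) n 0 (by lia)).app M).symm
    (hS.2.1 _ (single_zero_mem hS hA M hM) (-n))

/-- The induction is on the length `n` of the interval `[a, a + n]` containing the degrees of the
nonzero homology modules. -/
lemma mem_of_amplitude (hS : IsThickSubcat S)
    (hA : ∀ p : Ideal R, p.IsPrime →
      (singleFunctor (ModuleCat.{u} R) 0).obj (ModuleCat.of R (R ⧸ p)) ∈ S) (n : ℕ) :
    ∀ (a : ℤ) (E : DerivedCategory (ModuleCat.{u} R)),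
      (∀ m : ℤ, Module.Finite R ((homologyFunctor (ModuleCat.{u} R) m).obj E)) →
      E.IsGE a → E.IsLE (a + n) → E ∈ S := by
  induction n with
  | zero =>
    intro a E hfg h₁ h₂
    rw [Nat.cast_zero, add_zero] at h₂
    obtain ⟨Y, ⟨e⟩⟩ := exists_iso_singleFunctor_obj_of_isGE_of_isLE E a
    have e' : (homologyFunctor (ModuleCat.{u} R) a).obj E ≅ Y :=
      (homologyFunctor _ a).mapIso e ≪≫ (singleFunctorCompHomologyFunctorIso _ a).app Y
    have := hfg a
    exact hS.of_iso e (single_mem hS hA Y (Module.Finite.equiv e'.toLinearEquiv) a)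
  | succ n ih =>
    intro a E hfg h₁ h₂
    obtain ⟨X, Y, hX, hY, f, g, h, hT⟩ := TStructure.t.exists_triangle E a (a + 1) rfl
    have hX' : X.IsLE a := ⟨hX⟩
    have hY' : Y.IsGE (a + 1) := ⟨hY⟩
    have hmono (m : ℤ) (hm : m ≤ a) : Mono ((homologyFunctor (ModuleCat.{u} R) m).map f) :=
      (HomologySequence.mono_homologyMap_mor₁_iff _ hT (m - 1) m (by lia)).2
        ((Y.isZero_of_isGE (a + 1) (m - 1) (by lia)).eq_of_src _ _)
    have hepi (m : ℤ) (hm : a + 1 ≤ m) : Epi ((homologyFunctor (ModuleCat.{u} R) m).map g) :=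
      (HomologySequence.epi_homologyMap_mor₂_iff _ hT m (m + 1) (by lia)).2
        ((X.isZero_of_isLE a (m + 1) (by lia)).eq_of_tgt _ _)
    have hfin0 (M : ModuleCat.{u} R) (hM : IsZero M) : Module.Finite R M := by
      have := ModuleCat.subsingleton_of_isZero hM
      infer_instance
    refine hS.ext₂ _ hT (ih a X ?_ ?_ ?_) (ih (a + 1) Y ?_ hY' ?_)
    · intro m
      by_cases hm : m ≤ a
      · have := hfg m
        have := hmono m hm
        exact Module.Finite.of_injective _ ((ModuleCat.mono_iff_injective _).1 this)
      · exact hfin0 _ (X.isZero_of_isLE a m (by lia))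
    · rw [isGE_iff]
      intro i hi
      have := hmono i hi.le
      exact IsZero.of_mono ((homologyFunctor (ModuleCat.{u} R) i).map f)
        (E.isZero_of_isGE a i hi)
    · rw [isLE_iff]
      intro i hi
      exact X.isZero_of_isLE a i (by lia)
    · intro m
      by_cases hm : a + 1 ≤ m
      · have := hfg m
        have := hepi m hm
        exact Module.Finite.of_surjective _ ((ModuleCat.epi_iff_surjective _).1 this)
      · exact hfin0 _ (Y.isZero_of_isGE (a + 1) m (by lia))
    · rw [isLE_iff]
      intro i hi
      have := hepi i (by lia)
      exact IsZero.of_epi ((homologyFunctor (ModuleCat.{u} R) i).map g)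
        (E.isZero_of_isLE (a + (n + 1 : ℕ)) i (by lia))

end

/--
let `R` be a commutative Noetherian ring of finite Krull dimension. Then
every object `E` of `D(Mod R)` with bounded finitely generated homology belongs to the
smallest thick subcategory of `D(Mod R)` containing the set of objects `R ⧸ 𝔭` (in
degree `0`) for `𝔭` ranging over the prime ideals of `R`.
-/
theorem statement16 (R : Type u) [CommRing R] [IsNoetherianRing R]
    (hdim : ringKrullDim R < ⊤)
    [HasDerivedCategory (ModuleCat.{u} R)]
    (E : DerivedCategory (ModuleCat.{u} R))
    (hfg : ∀ m : ℤ,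
      Module.Finite R ((DerivedCategory.homologyFunctor (ModuleCat.{u} R) m).obj E))
    (hbdd : {m : ℤ |
      ¬ IsZero ((DerivedCategory.homologyFunctor (ModuleCat.{u} R) m).obj E)}.Finite) :
    E ∈ thickClosure {X | ∃ (p : Ideal R), p.IsPrime ∧
      X = (DerivedCategory.singleFunctor (ModuleCat.{u} R) 0).obj (ModuleCat.of R (R ⧸ p))} := by
  intro S ⟨hA, hS⟩
  obtain ⟨a, ha⟩ := hbdd.bddBelow
  obtain ⟨b, hb⟩ := hbdd.bddAbove
  refine mem_of_amplitude hS (fun p hp ↦ hA ⟨p, hp, rfl⟩) (b - a).toNat a E hfg ?_ ?_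
  · rw [DerivedCategory.isGE_iff]
    intro i hi
    by_contra h
    have := ha h
    lia
  · rw [DerivedCategory.isLE_iff]
    intro i hi
    by_contra h
    have := hb h
    lia

end Stmt
end
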